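/- Let N ≥ 2, let ω_ij = ω_ji, α_ij = α_ji, l_ij = l_ji ∈ ℝ (with ω_ii = 0), and let Ṽ(q) = (1/2) Σ_{i<j} α_ij ω_ij (r_ij − l_ij)² where r_ij = ‖q_i − q_j‖. Then Ṽ is twice continuously differentiable at every placement q = (x, y) with pairwise distinct node positions, and its Hessian at q, viewed as a 2N×2N matrix in the coordinates (x, y), equals [[Ω̃(q) + L_c^x, L_c^{xy}],[L_c^{xy}, Ω̃(q) + L_c^y]], where Ω̃(q) is the stress matrix of the effective stresses ω̃_ij(q) = α_ij ω_ij (1 − l_ij/r_ij) and the matrices L_c^x, L_c^y, L_c^{xy} are built from the coefficients c_ij = α_ij ω_ij l_ij / r_ij³ evaluated at q. -/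

import Mathlib

open Finset Matrix

/-- The stress matrix of symmetric stresses `ω̃`: off-diagonal entries `-ω̃ i j`,
diagonal entries `∑_{k ≠ i} ω̃ i k`. -/
noncomputable def stressMatrix {N : ℕ} (ω : Fin N → Fin N → ℝ) : Matrix (Fin N) (Fin N) ℝ :=
  Matrix.of fun i j => if i = j then ∑ k ∈ Finset.univ.erase i, ω i k else -ω i j

/-- The `L`-matrix built from coefficients `c` and edge quantities `g`: off-diagonal
entries `-c i j * g i j`, diagonal entries `∑_{k ≠ i} c i k * g i k`. -/
noncomputable def Lmat {N : ℕ} (c g : Fin N → Fin N → ℝ) : Matrix (Fin N) (Fin N) ℝ :=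
  Matrix.of fun i j =>
    if i = j then ∑ k ∈ Finset.univ.erase i, c i k * g i k else -(c i j * g i j)

/-!
Each term of the potential is the energy of a spring, whose end-to-end vector `p = q_i - q_j` is
linear in the placement. Away from `p = 0` the function `(‖p‖ - l)² / 2` has gradient
`(1 - l / ‖p‖) p` and Hessian form
`(v, w) ↦ (1 - l / ‖p‖) ⟪v, w⟫ + l / ‖p‖³ ⟪p, v⟫ ⟪p, w⟫`.
Summing over the springs, the first term contributes the effective stresses and, after expanding
the inner products in coordinates, the second contributes the coefficients `c_ij`. The blocks then
come from the Laplacian identity `fᵀ Ω h = ∑_{i < j} ω_ij (f_i - f_j) (h_i - h_j)`.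
-/

section Spring

open scoped RealInnerProductSpace Topology

variable {F : Type*} [NormedAddCommGroup F] [InnerProductSpace ℝ F]

lemma hasFDerivAt_norm_of_ne_zero {p : F} (hp : p ≠ 0) :
    HasFDerivAt (fun p : F => ‖p‖) (‖p‖⁻¹ • innerSL ℝ p) p := by
  have hsqrt := (hasStrictFDerivAt_norm_sq p).hasFDerivAt.sqrt (by simpa using hp)
  simp only [Real.sqrt_sq (norm_nonneg _)] at hsqrt
  refine hsqrt.congr_fderiv ?_
  ext v
  simp only [one_div, _root_.mul_inv_rev, _root_.smul_apply, coe_innerSL_apply, nsmul_eq_mul,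
    Nat.cast_ofNat, smul_eq_mul]
  field_simp

lemma hasFDerivAt_norm_sub_const_sq (l : ℝ) {p : F} (hp : p ≠ 0) :
    HasFDerivAt (fun p : F => (‖p‖ - l) ^ 2) ((2 * (1 - l / ‖p‖)) • innerSL ℝ p) p := by
  refine (((hasFDerivAt_norm_of_ne_zero hp).sub_const l).pow 2).congr_fderiv ?_
  have hr : ‖p‖ ≠ 0 := norm_ne_zero_iff.mpr hp
  ext v
  simp only [Nat.add_one_sub_one, pow_one, nsmul_eq_mul, Nat.cast_ofNat, _root_.smul_apply,
    coe_innerSL_apply, smul_eq_mul]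
  field_simp

lemma hasFDerivAt_one_sub_div_norm (l : ℝ) {p : F} (hp : p ≠ 0) :
    HasFDerivAt (fun p : F => 1 - l / ‖p‖) ((l / ‖p‖ ^ 3) • innerSL ℝ p) p := by
  have hr : ‖p‖ ≠ 0 := norm_ne_zero_iff.mpr hp
  have hinv := (hasDerivAt_inv hr).comp_hasFDerivAt p (hasFDerivAt_norm_of_ne_zero hp)
  refine ((hinv.const_mul l).const_sub 1).congr_fderiv ?_
  ext v
  simp only [neg_smul, smul_neg, neg_neg, _root_.smul_apply, coe_innerSL_apply, smul_eq_mul]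
  field_simp

lemma hasFDerivAt_one_sub_div_norm_mul_inner (l : ℝ) {p : F} (hp : p ≠ 0) (w : F) :
    HasFDerivAt (fun p : F => (1 - l / ‖p‖) * ⟪p, w⟫)
      ((1 - l / ‖p‖) • innerSL ℝ w + (l / ‖p‖ ^ 3 * ⟪p, w⟫) • innerSL ℝ p) p := by
  have hinner : HasFDerivAt (fun p : F => ⟪p, w⟫) (innerSL ℝ w) p := by
    simp_rw [real_inner_comm w]
    exact (innerSL ℝ w).hasFDerivAt
  refine ((hasFDerivAt_one_sub_div_norm l hp).mul hinner).congr_fderiv ?_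
  rw [smul_smul, mul_comm ⟪p, w⟫]

variable {E : Type*} [NormedAddCommGroup E] [NormedSpace ℝ E] {ι : Type*}

/-- The elastic energy of a finite family `s` of springs with stiffnesses `k` and rest lengths `l`
in the configuration `z`. The end-to-end vector of the spring `e` depends linearly on the
configuration and is given by `A e`. -/
noncomputable def springEnergy (s : Finset ι) (k l : ι → ℝ) (A : ι → E →L[ℝ] F) (z : E) : ℝ :=
  1 / 2 * ∑ e ∈ s, k e * (‖A e z‖ - l e) ^ 2

variable {s : Finset ι} (k l : ι → ℝ) {A : ι → E →L[ℝ] F} {z : E}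

lemma contDiffAt_springEnergy {n : WithTop ℕ∞} (hz : ∀ e ∈ s, A e z ≠ 0) :
    ContDiffAt ℝ n (springEnergy s k l A) z := by
  refine contDiffAt_const.mul (ContDiffAt.sum fun e he => contDiffAt_const.mul ?_)
  exact (((A e).contDiff.contDiffAt.norm ℝ (hz e he)).sub contDiffAt_const).pow 2

lemma hasFDerivAt_springEnergy (hz : ∀ e ∈ s, A e z ≠ 0) :
    HasFDerivAt (springEnergy s k l A)
      (∑ e ∈ s, (k e * (1 - l e / ‖A e z‖)) • (innerSL ℝ (A e z)).comp (A e)) z := by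
  have hsum := (HasFDerivAt.fun_sum fun e he =>
    ((hasFDerivAt_norm_sub_const_sq (l e) (hz e he)).comp z
      (A e).hasFDerivAt).const_mul (k e)).const_mul (1 / 2 : ℝ)
  refine hsum.congr_fderiv ?_
  rw [Finset.smul_sum]
  refine Finset.sum_congr rfl fun e _ => ?_
  rw [ContinuousLinearMap.smul_comp, smul_smul, smul_smul]
  congr 1
  ring

lemma fderiv_springEnergy_apply_eventuallyEq (hz : ∀ e ∈ s, A e z ≠ 0) (w : E) :
    (fun z => fderiv ℝ (springEnergy s k l A) z w) =ᶠ[𝓝 z]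
      fun z => ∑ e ∈ s, k e * ((1 - l e / ‖A e z‖) * ⟪A e z, A e w⟫) := by
  have hnear : ∀ᶠ z' in 𝓝 z, ∀ e ∈ s, A e z' ≠ 0 :=
    (Filter.eventually_all_finset s).mpr fun e he =>
      (A e).continuous.continuousAt.eventually_ne (hz e he)
  filter_upwards [hnear] with z' hz'
  simp [(hasFDerivAt_springEnergy k l hz').fderiv, mul_assoc]

lemma fderiv_fderiv_springEnergy_apply (hz : ∀ e ∈ s, A e z ≠ 0) (v w : E) :
    fderiv ℝ (fun z => fderiv ℝ (springEnergy s k l A) z w) z v =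
      ∑ e ∈ s, (k e * (1 - l e / ‖A e z‖) * ⟪A e v, A e w⟫ +
        k e * l e / ‖A e z‖ ^ 3 * (⟪A e z, A e v⟫ * ⟪A e z, A e w⟫)) := by
  have hsum := HasFDerivAt.fun_sum fun e he =>
    ((hasFDerivAt_one_sub_div_norm_mul_inner (l e) (hz e he) (A e w)).comp z
      (A e).hasFDerivAt).const_mul (k e)
  rw [(hsum.congr_of_eventuallyEq (fderiv_springEnergy_apply_eventuallyEq k l hz w)).fderiv,
    _root_.sum_apply]
  refine Finset.sum_congr rfl fun e _ => ?_
  simp only [_root_.smul_apply, _root_.add_apply, ContinuousLinearMap.comp_apply,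
    innerSL_apply_apply, smul_eq_mul, real_inner_comm (A e v) (A e w)]
  ring

end Spring

section StressMatrix

variable {N : ℕ}

lemma Lmat_eq_stressMatrix (c g : Fin N → Fin N → ℝ) :
    Lmat c g = stressMatrix fun i j => c i j * g i j :=
  rfl

lemma stressMatrix_add (g h : Fin N → Fin N → ℝ) :
    stressMatrix (g + h) = stressMatrix g + stressMatrix h := by
  ext i j
  by_cases hij : i = j <;> simp [stressMatrix, hij, Finset.sum_add_distrib, add_comm]

lemma stressMatrix_mulVec_apply (g : Fin N → Fin N → ℝ) (f : Fin N → ℝ) (i : Fin N) :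
    (stressMatrix g *ᵥ f) i = ∑ j ∈ univ.erase i, g i j * (f i - f j) := by
  have hoff : ∀ j ∈ univ.erase i, stressMatrix g i j * f j = -(g i j * f j) := fun j hj => by
    simp [stressMatrix, (Finset.ne_of_mem_erase hj).symm]
  rw [Matrix.mulVec, dotProduct, ← Finset.add_sum_erase univ _ (mem_univ i),
    Finset.sum_congr rfl hoff]
  simp only [stressMatrix, of_apply, if_true, mul_sub, Finset.sum_mul, Finset.sum_sub_distrib,
    Finset.sum_neg_distrib, ← sub_eq_add_neg]

lemma sum_univ_filter_lt {ι M : Type*} [Fintype ι] [Preorder ι] [DecidableLT ι]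
    [LocallyFiniteOrderTop ι] [AddCommMonoid M] (f : ι × ι → M) :
    ∑ e with e.1 < e.2, f e = ∑ i, ∑ j ∈ Ioi i, f (i, j) := by
  simp [Finset.sum_filter, Fintype.sum_prod_type, ← Finset.filter_lt_eq_Ioi]

lemma dotProduct_stressMatrix_mulVec {g : Fin N → Fin N → ℝ} (hg : ∀ i j, g i j = g j i)
    (f h : Fin N → ℝ) :
    f ⬝ᵥ stressMatrix g *ᵥ h =
      ∑ e : Fin N × Fin N with e.1 < e.2, g e.1 e.2 * ((f e.1 - f e.2) * (h e.1 - h e.2)) :=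
  calc f ⬝ᵥ stressMatrix g *ᵥ h
      = ∑ i, ∑ j ∈ {i}ᶜ, f i * (g i j * (h i - h j)) := by
        simp only [dotProduct, stressMatrix_mulVec_apply, Finset.mul_sum, Finset.compl_singleton]
    _ = ∑ i, ∑ j ∈ Ioi i, (f i * (g i j * (h i - h j)) + f j * (g j i * (h j - h i))) :=
        (Finset.sum_sum_Ioi_add_eq_sum_sum_off_diag fun j i => f i * (g i j * (h i - h j))).symm
    _ = ∑ e : Fin N × Fin N with e.1 < e.2, g e.1 e.2 * ((f e.1 - f e.2) * (h e.1 - h e.2)) := by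
        rw [sum_univ_filter_lt]
        refine Finset.sum_congr rfl fun i _ => Finset.sum_congr rfl fun j _ => ?_
        rw [hg j i]
        ring

end StressMatrix

lemma sumElim_single_zero {ι κ R : Type*} [DecidableEq ι] [DecidableEq κ] [Zero R] (i : ι) (r : R) :
    Sum.elim (Pi.single i r) (0 : κ → R) = Pi.single (Sum.inl i) r := by
  ext (j | j) <;> simp [Pi.single_apply]

lemma sumElim_zero_single {ι κ R : Type*} [DecidableEq ι] [DecidableEq κ] [Zero R] (j : κ) (r : R) :
    Sum.elim (0 : ι → R) (Pi.single j r) = Pi.single (Sum.inr j) r := by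
  ext (i | i) <;> simp [Pi.single_apply]

section Planar

open scoped RealInnerProductSpace

variable {ι : Type*}

/-- The linear map sending a planar placement `(x, y)` to the vector `q_i - q_j` between the nodes
of `e = (i, j)`. The target is `WithLp 2 (ℝ × ℝ)` so that its norm is the Euclidean one. -/
noncomputable def edgeVector (e : ι × ι) : ((ι → ℝ) × (ι → ℝ)) →L[ℝ] WithLp 2 (ℝ × ℝ) :=
  let d : (ι → ℝ) →L[ℝ] ℝ := .proj e.1 - .proj e.2
  (WithLp.prodContinuousLinearEquiv 2 ℝ ℝ ℝ).symm.toContinuousLinearMap.comp (d.prodMap d)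

lemma edgeVector_apply (e : ι × ι) (z : (ι → ℝ) × (ι → ℝ)) :
    edgeVector e z = WithLp.toLp 2 (z.1 e.1 - z.1 e.2, z.2 e.1 - z.2 e.2) :=
  rfl

lemma norm_edgeVector (e : ι × ι) (z : (ι → ℝ) × (ι → ℝ)) :
    ‖edgeVector e z‖ = √((z.1 e.1 - z.1 e.2) ^ 2 + (z.2 e.1 - z.2 e.2) ^ 2) := by
  simp [edgeVector_apply, WithLp.prod_norm_eq_of_L2]

lemma inner_edgeVector (e : ι × ι) (z w : (ι → ℝ) × (ι → ℝ)) :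
    ⟪edgeVector e z, edgeVector e w⟫ =
      (z.1 e.1 - z.1 e.2) * (w.1 e.1 - w.1 e.2) + (z.2 e.1 - z.2 e.2) * (w.2 e.1 - w.2 e.2) := by
  simp [edgeVector_apply, mul_comm]

lemma norm_edgeVector_comm (i j : ι) (z : (ι → ℝ) × (ι → ℝ)) :
    ‖edgeVector (i, j) z‖ = ‖edgeVector (j, i) z‖ := by
  simp only [norm_edgeVector, sub_sq_comm (z.1 i), sub_sq_comm (z.2 i)]

lemma edgeVector_ne_zero_iff {e : ι × ι} {z : (ι → ℝ) × (ι → ℝ)} :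
    edgeVector e z ≠ 0 ↔ (z.1 e.1, z.2 e.1) ≠ (z.1 e.2, z.2 e.2) := by
  simp [edgeVector_apply, sub_eq_zero]

lemma sum_edgeVector_forms_eq_dotProduct_fromBlocks {N : ℕ} {τ c : Fin N → Fin N → ℝ}
    (hτ : ∀ i j, τ i j = τ j i) (hc : ∀ i j, c i j = c j i) (x y : Fin N → ℝ)
    (v w : (Fin N → ℝ) × (Fin N → ℝ)) :
    ∑ e with e.1 < e.2, (τ e.1 e.2 * ⟪edgeVector e v, edgeVector e w⟫ +
        c e.1 e.2 * (⟪edgeVector e (x, y), edgeVector e v⟫ *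
          ⟪edgeVector e (x, y), edgeVector e w⟫)) =
      Sum.elim v.1 v.2 ⬝ᵥ
        Matrix.fromBlocks
          (stressMatrix τ + Lmat c (fun i j => (x i - x j) ^ 2))
          (Lmat c (fun i j => (x i - x j) * (y i - y j)))
          (Lmat c (fun i j => (x i - x j) * (y i - y j)))
          (stressMatrix τ + Lmat c (fun i j => (y i - y j) ^ 2)) *ᵥ Sum.elim w.1 w.2 := by
  simp only [Matrix.fromBlocks_mulVec, Sum.elim_comp_inl, Sum.elim_comp_inr,
    sumElim_dotProduct_sumElim, dotProduct_add, Lmat_eq_stressMatrix, ← stressMatrix_add]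
  rw [dotProduct_stressMatrix_mulVec fun i j => by simp only [Pi.add_apply, hτ i j, hc i j]; ring,
    dotProduct_stressMatrix_mulVec fun i j => by rw [hc i j]; ring,
    dotProduct_stressMatrix_mulVec fun i j => by rw [hc i j]; ring,
    dotProduct_stressMatrix_mulVec fun i j => by simp only [Pi.add_apply, hτ i j, hc i j]; ring]
  simp only [← Finset.sum_add_distrib, inner_edgeVector, Pi.add_apply]
  exact Finset.sum_congr rfl fun e _ => by ring

lemma fderiv_fderiv_springEnergy_edgeVector_apply {N : ℕ} {k l : Fin N → Fin N → ℝ}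
    (hk : ∀ i j, k i j = k j i) (hl : ∀ i j, l i j = l j i) {x y : Fin N → ℝ}
    (hne : ∀ e ∈ ({e | e.1 < e.2} : Finset (Fin N × Fin N)), edgeVector e (x, y) ≠ 0)
    {r τ c : Fin N → Fin N → ℝ} (hr : ∀ i j, r i j = ‖edgeVector (i, j) (x, y)‖)
    (hτ : ∀ i j, τ i j = k i j * (1 - l i j / r i j))
    (hc : ∀ i j, c i j = k i j * l i j / r i j ^ 3) (v w : (Fin N → ℝ) × (Fin N → ℝ)) :
    fderiv ℝ (fun z => fderiv ℝ (springEnergy {e : Fin N × Fin N | e.1 < e.2}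
        (fun e => k e.1 e.2) (fun e => l e.1 e.2) edgeVector) z w) (x, y) v =
      Sum.elim v.1 v.2 ⬝ᵥ
        Matrix.fromBlocks
          (stressMatrix τ + Lmat c (fun i j => (x i - x j) ^ 2))
          (Lmat c (fun i j => (x i - x j) * (y i - y j)))
          (Lmat c (fun i j => (x i - x j) * (y i - y j)))
          (stressMatrix τ + Lmat c (fun i j => (y i - y j) ^ 2)) *ᵥ Sum.elim w.1 w.2 := by
  have hr_symm : ∀ i j, r i j = r j i := fun i j => by rw [hr, hr, norm_edgeVector_comm]
  have hτ_symm : ∀ i j, τ i j = τ j i := fun i j => by rw [hτ, hτ, hk, hl, hr_symm]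
  have hc_symm : ∀ i j, c i j = c j i := fun i j => by rw [hc, hc, hk, hl, hr_symm]
  rw [fderiv_fderiv_springEnergy_apply _ _ hne,
    ← sum_edgeVector_forms_eq_dotProduct_fromBlocks hτ_symm hc_symm]
  simp only [hτ, hc, hr]

end Planar

/-- the augmented potential `Ṽ` is `C²` at every placement with pairwise
distinct node positions, and its Hessian there, as a `2N×2N` matrix in the coordinates
`(x, y)`, is `[[Ω̃(q) + L_c^x, L_c^xy],[L_c^xy, Ω̃(q) + L_c^y]]`, where `Ω̃(q)` is the
stress matrix of the effective stresses `ω̃_ij(q) = α_ij ω_ij (1 − l_ij/r_ij)` and the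
`L`-matrices are built from `c_ij = α_ij ω_ij l_ij / r_ij³`. -/
theorem augmented_potential_hessian
    {N : ℕ} (hN : 2 ≤ N)
    (ω α l : Fin N → Fin N → ℝ)
    (hωs : ∀ i j, ω i j = ω j i) (hαs : ∀ i j, α i j = α j i) (hls : ∀ i j, l i j = l j i)
    (hωd : ∀ i, ω i i = 0)
    (Vt : (Fin N → ℝ) × (Fin N → ℝ) → ℝ)
    (hVt : Vt = fun z => (1 / 2 : ℝ) * ∑ i : Fin N, ∑ j : Fin N, (if i < j then
        α i j * ω i j *
          (Real.sqrt ((z.1 i - z.1 j) ^ 2 + (z.2 i - z.2 j) ^ 2) - l i j) ^ 2 else 0))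
    (x y : Fin N → ℝ)
    (hdist : ∀ i j : Fin N, i ≠ j → (x i, y i) ≠ (x j, y j))
    (r : Fin N → Fin N → ℝ)
    (hr : ∀ i j, r i j = Real.sqrt ((x i - x j) ^ 2 + (y i - y j) ^ 2))
    (ωt : Fin N → Fin N → ℝ)
    (hωt : ∀ i j, ωt i j = α i j * ω i j * (1 - l i j / r i j))
    (c : Fin N → Fin N → ℝ)
    (hc : ∀ i j, c i j = α i j * ω i j * l i j / (r i j) ^ 3)
    (basis : Fin N ⊕ Fin N → (Fin N → ℝ) × (Fin N → ℝ))
    (hbasis : basis = Sum.elim (fun i => (Pi.single i 1, 0)) (fun i => (0, Pi.single i 1))) :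
    ContDiffAt ℝ 2 Vt (x, y) ∧
    ∀ a b : Fin N ⊕ Fin N,
      fderiv ℝ (fun z => fderiv ℝ Vt z (basis b)) (x, y) (basis a) =
        (Matrix.fromBlocks
          (stressMatrix ωt + Lmat c (fun i j => (x i - x j) ^ 2))
          (Lmat c (fun i j => (x i - x j) * (y i - y j)))
          (Lmat c (fun i j => (x i - x j) * (y i - y j)))
          (stressMatrix ωt + Lmat c (fun i j => (y i - y j) ^ 2))) a b := by
  have hV : Vt = springEnergy {e : Fin N × Fin N | e.1 < e.2} (fun e => α e.1 e.2 * ω e.1 e.2)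
      (fun e => l e.1 e.2) edgeVector := by
    ext z
    simp [hVt, springEnergy, norm_edgeVector, Finset.sum_filter, Fintype.sum_prod_type]
  have hne : ∀ e ∈ ({e | e.1 < e.2} : Finset (Fin N × Fin N)), edgeVector e (x, y) ≠ 0 :=
    fun e he => edgeVector_ne_zero_iff.mpr (hdist e.1 e.2 (Finset.mem_filter.mp he).2.ne)
  have hcoord : ∀ a, Sum.elim (basis a).1 (basis a).2 = Pi.single a 1 := by
    subst hbasis
    rintro (i | i)
    exacts [sumElim_single_zero i 1, sumElim_zero_single i 1]
  refine ⟨hV ▸ contDiffAt_springEnergy _ _ hne, fun a b => ?_⟩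
  have hk : ∀ i j, α i j * ω i j = α j i * ω j i := fun i j => by rw [hαs, hωs]
  have hr_norm : ∀ i j, r i j = ‖edgeVector (i, j) (x, y)‖ := fun i j => by
    rw [hr, norm_edgeVector]
  rw [hV, fderiv_fderiv_springEnergy_edgeVector_apply hk hls hne hr_norm hωt hc,
    hcoord, hcoord, Matrix.mulVec_single_one, single_one_dotProduct, Matrix.col_apply]
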